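/- There exists ε₀ > 0 such that for every ε ∈ (0, ε₀) and every constant C₂ ≥ 1 there is q₀(ε, C₂) with the following property. Let q ≥ q₀ be a natural number, let h : ℕ → ℝ∖{0} be a multiplicative function, and adopt the Easy set-up. For each Δ ∈ {+,−}, let g^Δ : (ℤ/qℤ)^× → ℝ satisfy: (D1) 0 ≤ g^Δ(a) ≤ 1 + ε² for all a; (D4) 𝔼_{a∈(ℤ/qℤ)^×} g^Δ(a) = 𝔼_{n∈[I]_q} f^Δ(n); (D5) for every subgroup H ≤ (ℤ/qℤ)^× of index 2 and every b ∈ (ℤ/qℤ)^×, |𝔼_{n∈[I]_q} f^Δ(n)·1[n mod q ∈ bH] − 𝔼_{a∈(ℤ/qℤ)^×} g^Δ(a)·1[a ∈ bH]| ≤ C₂·(log q)^{−1/4}. Define A^Δ := {a ∈ (ℤ/qℤ)^× : g^Δ(a) ≥ ε²}. Then: (i) |A^+| + |A^−| ≥ (1 − ε)·φ(q); (ii) for every Δ ∈ {+,−}, every subgroup H ≤ (ℤ/qℤ)^× of index at most 2, and every b ∈ (ℤ/qℤ)^×: |A^Δ ∩ bH| ≥ (#{n ∈ [I]_q : gcd(n,P(z))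 = 1, sgn(h(n)) = Δ, n mod q ∈ bH} / #{n ∈ [I]_q : gcd(n,P(z)) = 1} − ε)·φ(q). -/

import Mathlib

/-!
Write `S` for the number of `n ∈ [I]_q` free of primes `< z`, `N = |[I]_q|` and `M` for the Mertens
factor. Summing `g^Δ` over a coset and splitting at the level `ε²` gives
`∑_{bH} g^Δ ≤ (1 + ε²) |A^Δ ∩ bH| + ε² φ(q)`, while the mean and coset hypotheses identify
`∑_{bH} g^Δ / φ(q)` with `M / N` times the number of sifted `n` of sign `Δ` in `bH`, up to
`C₂ (log q)^(-1/4)`. Both conclusions follow (`level_arith`) once `M S ≥ (1 - ε/4) N`, a lower bound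
in the fundamental lemma of the sieve at `z = q^√ε` (`sieve_lower`).

That bound is proved with the Brun–Hooley sieve (`brun_hooley`, `sieve_minorant`). The primes `< z`
are split into the blocks `[z^(2^{-(j+1)}), z^(2^{-j}))`, and inclusion–exclusion in the `j`-th block
is truncated at the even level `2 (m + j)`. Since `∑ 1/p` is bounded on each block (from the
primorial bound `∏_{p ≤ n} p ≤ 4^n`), Rankin's trick bounds the truncation errors, and the outcome is
a minorant of total weight at most `z^(4m+6)` that loses only a relative error exponentially small
in `m`. Taking `m ≈ 1 / (32 √ε)` makes the weight a small power of `q` and the loss at most `ε/8`.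
Coprimality to `q` is detected by complete inclusion–exclusion over the primes dividing `q`, which is
affordable because `4^ω(q) ≪ q^(1/8)` (`exists_four_pow_omega_le`).
-/

open scoped BigOperators Classical

noncomputable section

/-- `h` is a multiplicative arithmetic function. -/
def IsMultFn (h : ℕ → ℝ) : Prop :=
  h 1 = 1 ∧ ∀ m n : ℕ, Nat.Coprime m n → h (m * n) = h m * h n

/-- `P(z)`: the product of all primes `p < z`. -/
def primorialLT (z : ℝ) : ℕ :=
  ∏ p ∈ (Finset.range ⌈z⌉₊).filter Nat.Prime, p

/-- The Mertens-type factor `∏_{p < z, p ∤ q} (1 - 1/p)⁻¹`. -/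
def mertensFactor (q : ℕ) (z : ℝ) : ℝ :=
  ∏ p ∈ (Finset.range ⌈z⌉₊).filter (fun p : ℕ => p.Prime ∧ ¬ p ∣ q), (1 - 1 / (p : ℝ))⁻¹

/-- The residue of `n` modulo `q` lies (as a unit) in `B ⊆ (ℤ/qℤ)ˣ`. -/
def memUnit (q : ℕ) (B : Set ((ZMod q)ˣ)) (n : ℕ) : Prop :=
  ∃ u : (ZMod q)ˣ, ((u : ZMod q) = (n : ZMod q)) ∧ u ∈ B

/-- `[I]_q` for `I = (R/e, R]` with `R = q^(1/2)` (Easy set-up). -/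
def IqE (q : ℕ) : Finset ℕ :=
  (Finset.range (⌊(q : ℝ) ^ ((1 : ℝ) / 2)⌋₊ + 1)).filter fun n : ℕ =>
    (q : ℝ) ^ ((1 : ℝ) / 2) / Real.exp 1 < (n : ℝ) ∧ Nat.Coprime n q

/-- `f^Δ` from the Easy set-up; the sign `Δ` is encoded as `±1 : ℝ`, and
`sgn(h(n)) = Δ` is expressed as `0 < Δ · h n`. -/
def fE (q : ℕ) (ε : ℝ) (h : ℕ → ℝ) (Δ : ℝ) (n : ℕ) : ℝ :=
  mertensFactor q ((q : ℝ) ^ Real.sqrt ε) *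
    (if 0 < Δ * h n ∧ Nat.gcd n (primorialLT ((q : ℝ) ^ Real.sqrt ε)) = 1 ∧ n ∈ IqE q
      then 1 else 0)

/-- `𝒬_B^Δ` (Easy set-up): primes in `(q^ε/e, q^ε]` landing in `B` with sign `Δ`. -/
def QE (q : ℕ) (ε : ℝ) (h : ℕ → ℝ) (B : Set ((ZMod q)ˣ)) (Δ : ℝ) : Set ℕ :=
  {p : ℕ | p.Prime ∧ (q : ℝ) ^ ε / Real.exp 1 < (p : ℝ) ∧ (p : ℝ) ≤ (q : ℝ) ^ ε ∧
    memUnit q B p ∧ 0 < Δ * h p}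

/-- `𝒰_B^Δ` (Easy set-up): squarefree `u ≤ q^(1/2)` landing in `B` with sign `Δ`. -/
def UE (q : ℕ) (h : ℕ → ℝ) (B : Set ((ZMod q)ˣ)) (Δ : ℝ) : Set ℕ :=
  {u : ℕ | (u : ℝ) ≤ (q : ℝ) ^ ((1 : ℝ) / 2) ∧ Squarefree u ∧ memUnit q B u ∧ 0 < Δ * h u}

/-- Indicator function of a set of naturals. -/
def ind (S : Set ℕ) (n : ℕ) : ℝ := if n ∈ S then 1 else 0

/-- `∑_{n ≡ a (mod q)} (g₁ ∗ g₂ ∗ g₃ ∗ g₄ ∗ g₅)(n)` for the Dirichlet convolution `∗` on `ℕ`. -/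
def conv5Sum (q : ℕ) (g₁ g₂ g₃ g₄ g₅ : ℕ → ℝ) (a : ZMod q) : ℝ :=
  ∑ᶠ t : ℕ × ℕ × ℕ × ℕ × ℕ,
    if ((t.1 * t.2.1 * t.2.2.1 * t.2.2.2.1 * t.2.2.2.2 : ℕ) : ZMod q) = a then
      g₁ t.1 * g₂ t.2.1 * g₃ t.2.2.1 * g₄ t.2.2.2.1 * g₅ t.2.2.2.2 else 0

/-- `S^{Δ̄}_{B₂,B₃}(a)` from the Easy set-up. -/
def SE (q : ℕ) (ε : ℝ) (h : ℕ → ℝ) (B₂ B₃ : Set ((ZMod q)ˣ)) (Δ₁ Δ₂ Δ₃ : ℝ)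
    (a : (ZMod q)ˣ) : ℝ :=
  (1 / (((IqE q).card : ℝ) ^ 3 * (q : ℝ) ^ ε * (q : ℝ) ^ ((1 : ℝ) / 2))) *
    conv5Sum q (fE q ε h Δ₁) (fE q ε h Δ₁) (fE q ε h Δ₁)
      (ind (QE q ε h B₂ Δ₂)) (ind (UE q h B₃ Δ₃)) ((a : (ZMod q)ˣ) : ZMod q)

/-- `E_h^Δ(x)`: residues represented by a squarefree `n ≤ x` with `sgn(h(n)) = Δ`. -/
def EhSet (q : ℕ) (h : ℕ → ℝ) (Δ x : ℝ) : Set ((ZMod q)ˣ) :=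
  {a : (ZMod q)ˣ | ∃ n : ℕ, Squarefree n ∧ (n : ℝ) ≤ x ∧
    ((n : ZMod q) = (a : ZMod q)) ∧ 0 < Δ * h n}

/-! ### Divisor sums and their means -/

/-- Indicator of divisibility `d ∣ n`. -/
def divInd (n d : ℕ) : ℝ := if d ∣ n then 1 else 0

/-- `DivSum P F Y K`: the function `F` is a finite sum `∑ cᵢ · 1[dᵢ ∣ n]` with moduli `dᵢ > 0`
composed of primes in `P`, with natural density mean `Y = ∑ cᵢ / dᵢ` and `∑ |cᵢ| ≤ K`. -/
def DivSum (P : Set ℕ) (F : ℕ → ℝ) (Y K : ℝ) : Prop :=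
  ∃ (ι : Type) (s : Finset ι) (c : ι → ℝ) (d : ι → ℕ),
    (∀ i ∈ s, 0 < d i ∧ ∀ p : ℕ, p.Prime → p ∣ d i → p ∈ P) ∧
    (∀ n, F n = ∑ i ∈ s, c i * divInd n (d i)) ∧
    Y = ∑ i ∈ s, c i * (1 / (d i : ℝ)) ∧ ∑ i ∈ s, |c i| ≤ K

lemma DivSum.mono {P P' : Set ℕ} {F : ℕ → ℝ} {Y K K' : ℝ} (h : DivSum P F Y K)
    (hP : P ⊆ P') (hK : K ≤ K') : DivSum P' F Y K' := by
  obtain ⟨ι, s, c, d, h1, h2, h3, h4⟩ := h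
  exact ⟨ι, s, c, d, fun i hi => ⟨(h1 i hi).1, fun p hp hd => hP ((h1 i hi).2 p hp hd)⟩, h2, h3,
    h4.trans hK⟩

lemma DivSum.one : DivSum ∅ (fun _ => 1) 1 1 := by
  refine ⟨Unit, Finset.univ, fun _ => 1, fun _ => 1, ?_, ?_, ?_, ?_⟩
  · intro i _
    refine ⟨one_pos, fun p hp h => ?_⟩
    exact absurd (Nat.dvd_one.1 h) hp.one_lt.ne'
  · intro n; simp [divInd]
  · simp
  · simp

lemma DivSum.sub {P : Set ℕ} {F F' : ℕ → ℝ} {Y Y' K K' : ℝ} (h : DivSum P F Y K)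
    (h' : DivSum P F' Y' K') : DivSum P (fun n => F n - F' n) (Y - Y') (K + K') := by
  obtain ⟨ι, s, c, d, h1, h2, h3, h4⟩ := h
  obtain ⟨ι', s', c', d', h1', h2', h3', h4'⟩ := h'
  refine ⟨ι ⊕ ι', s.disjSum s', Sum.elim c (fun i => - c' i), Sum.elim d d', ?_, ?_, ?_, ?_⟩
  · rintro (i | i) hi
    · simpa using h1 i (by simpa using hi)
    · simpa using h1' i (by simpa using hi)
  · intro n
    simp only [h2, h2']
    rw [Finset.sum_disjSum]
    simp [sub_eq_add_neg]
  · rw [Finset.sum_disjSum, h3, h3']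
    simp [sub_eq_add_neg]
  · rw [Finset.sum_disjSum]
    simpa using add_le_add h4 h4'

lemma divInd_mul {n d d' : ℕ} (h : Nat.Coprime d d') :
    divInd n (d * d') = divInd n d * divInd n d' := by
  have h1 : d * d' ∣ n ↔ d ∣ n ∧ d' ∣ n :=
    ⟨fun hh => ⟨(Dvd.intro d' rfl).trans hh, (Dvd.intro_left d rfl).trans hh⟩,
      fun hh => h.mul_dvd_of_dvd_of_dvd hh.1 hh.2⟩
  unfold divInd
  by_cases h2 : d ∣ n <;> by_cases h3 : d' ∣ n <;> simp [h1, h2, h3]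

lemma DivSum.mul {P P' : Set ℕ} {F F' : ℕ → ℝ} {Y Y' K K' : ℝ} (h : DivSum P F Y K)
    (h' : DivSum P' F' Y' K') (hd : Disjoint P P') :
    DivSum (P ∪ P') (fun n => F n * F' n) (Y * Y') (K * K') := by
  obtain ⟨ι, s, c, d, h1, h2, h3, h4⟩ := h
  obtain ⟨ι', s', c', d', h1', h2', h3', h4'⟩ := h'
  have hcop : ∀ i ∈ s, ∀ j ∈ s', Nat.Coprime (d i) (d' j) := by
    intro i hi j hj
    by_contra hc
    obtain ⟨p, hp, hpd, hpd'⟩ := Nat.Prime.not_coprime_iff_dvd.1 hc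
    exact Set.disjoint_left.1 hd ((h1 i hi).2 p hp hpd) ((h1' j hj).2 p hp hpd')
  refine ⟨ι × ι', s ×ˢ s', fun x => c x.1 * c' x.2, fun x => d x.1 * d' x.2, ?_, ?_, ?_, ?_⟩
  · rintro ⟨i, j⟩ hij
    obtain ⟨hi, hj⟩ := Finset.mem_product.1 hij
    refine ⟨Nat.mul_pos (h1 i hi).1 (h1' j hj).1, fun p hp hpd => ?_⟩
    rcases hp.dvd_mul.1 hpd with h | h
    · exact Or.inl ((h1 i hi).2 p hp h)
    · exact Or.inr ((h1' j hj).2 p hp h)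
  · intro n
    simp only [h2, h2']
    rw [Finset.sum_mul_sum, ← Finset.sum_product']
    refine Finset.sum_congr rfl fun x hx => ?_
    obtain ⟨hi, hj⟩ := Finset.mem_product.1 hx
    rw [divInd_mul (hcop _ hi _ hj)]
    ring
  · rw [h3, h3', Finset.sum_mul_sum, ← Finset.sum_product']
    refine Finset.sum_congr rfl fun x hx => ?_
    push_cast
    rw [one_div, one_div, one_div, mul_inv]
    ring
  · rw [Finset.sum_product]
    simp only [abs_mul]
    rw [← Finset.sum_mul_sum]
    exact mul_le_mul h4 h4' (Finset.sum_nonneg fun _ _ => abs_nonneg _)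
      ((Finset.sum_nonneg fun _ _ => abs_nonneg _).trans h4)

lemma prod_divInd {T : Finset ℕ} (hT : ∀ p ∈ T, p.Prime) (n : ℕ) :
    ∏ p ∈ T, divInd n p = divInd n (∏ p ∈ T, p) := by
  induction T using Finset.induction_on with
  | empty => simp [divInd]
  | insert a s ha ih =>
    rw [Finset.prod_insert ha, Finset.prod_insert ha, divInd_mul, ih]
    · exact fun p hp => hT p (Finset.mem_insert_of_mem hp)
    · refine Nat.Coprime.prod_right fun p hp => ?_
      refine (Nat.coprime_primes (hT a (Finset.mem_insert_self _ _))
        (hT p (Finset.mem_insert_of_mem hp))).2 ?_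
      rintro rfl
      exact ha hp

/-- A polynomial in the indicators `1[p ∣ n]`, `p ∈ P`, is a divisor sum whose mean is the same
polynomial evaluated at `1 / p`. -/
lemma DivSum.powerset {P : Finset ℕ} (hP : ∀ p ∈ P, p.Prime) (w : Finset ℕ → ℝ) :
    DivSum (P : Set ℕ) (fun n => ∑ T ∈ P.powerset, w T * ∏ p ∈ T, divInd n p)
      (∑ T ∈ P.powerset, w T * ∏ p ∈ T, (1 / (p : ℝ))) (∑ T ∈ P.powerset, |w T|) := by
  have hT : ∀ T ∈ P.powerset, ∀ p ∈ T, p.Prime := fun T hT p hp =>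
    hP p (Finset.mem_powerset.1 hT hp)
  refine ⟨Finset ℕ, P.powerset, w, fun T => ∏ p ∈ T, p, ?_, ?_, ?_, le_rfl⟩
  · intro T h
    refine ⟨Finset.prod_pos fun p hp => (hT T h p hp).pos, fun p hp hd => ?_⟩
    obtain ⟨r, hr, hpr⟩ := (hp.prime.dvd_finsetProd_iff _).1 hd
    rw [(Nat.prime_dvd_prime_iff_eq hp (hT T h r hr)).1 hpr]
    exact Finset.mem_powerset.1 h hr
  · intro n
    exact Finset.sum_congr rfl fun T h => by rw [prod_divInd (hT T h)]
  · refine Finset.sum_congr rfl fun T h => ?_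
    rw [Nat.cast_prod]
    simp

lemma sum_divInd {a b : ℝ} (ha : 0 ≤ a) (hab : a ≤ b) {d : ℕ} (hd : 0 < d) :
    |∑ n ∈ Finset.Ioc ⌊a⌋₊ ⌊b⌋₊, divInd n d - (b - a) * (1 / (d : ℝ))| ≤ 1 := by
  have hfl : ⌊a⌋₊ ≤ ⌊b⌋₊ := Nat.floor_mono hab
  have h0 : ∀ m : ℕ, ∑ n ∈ Finset.Ioc 0 m, divInd n d = ((m / d : ℕ) : ℝ) := by
    intro m
    unfold divInd
    rw [Finset.sum_boole, Nat.Ioc_filter_dvd_card_eq_div]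
  have h1 : ∑ n ∈ Finset.Ioc 0 ⌊a⌋₊, divInd n d + ∑ n ∈ Finset.Ioc ⌊a⌋₊ ⌊b⌋₊, divInd n d
      = ∑ n ∈ Finset.Ioc 0 ⌊b⌋₊, divInd n d := by
    rw [← Finset.sum_union, Finset.Ioc_union_Ioc_eq_Ioc (Nat.zero_le _) hfl]
    rw [Finset.disjoint_left]
    intro x hx hx'
    simp only [Finset.mem_Ioc] at hx hx'
    omega
  rw [h0, h0, ← Nat.floor_div_natCast, ← Nat.floor_div_natCast] at h1
  have hd' : (0 : ℝ) < d := by exact_mod_cast hd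
  have ha1 := Nat.floor_le (div_nonneg ha hd'.le)
  have hb1 := Nat.floor_le (div_nonneg (ha.trans hab) hd'.le)
  have ha2 := Nat.lt_floor_add_one (a / d)
  have hb2 := Nat.lt_floor_add_one (b / d)
  have h3 : (b - a) * (1 / (d : ℝ)) = b / d - a / d := by ring
  rw [h3, abs_le]
  constructor <;> linarith

lemma DivSum.sum_Ioc {P : Set ℕ} {F : ℕ → ℝ} {Y K : ℝ} (h : DivSum P F Y K)
    {a b : ℝ} (ha : 0 ≤ a) (hab : a ≤ b) :
    |∑ n ∈ Finset.Ioc ⌊a⌋₊ ⌊b⌋₊, F n - (b - a) * Y| ≤ K := by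
  obtain ⟨ι, s, c, d, h1, h2, h3, h4⟩ := h
  refine le_trans ?_ h4
  have : ∑ n ∈ Finset.Ioc ⌊a⌋₊ ⌊b⌋₊, F n - (b - a) * Y =
      ∑ i ∈ s, c i * (∑ n ∈ Finset.Ioc ⌊a⌋₊ ⌊b⌋₊, divInd n (d i) - (b - a) * (1 / (d i : ℝ))) := by
    simp only [h2, h3, mul_sub, Finset.sum_sub_distrib, Finset.mul_sum]
    rw [Finset.sum_comm]
    congr 1
    exact Finset.sum_congr rfl fun i _ => by ring
  rw [this]
  refine (Finset.abs_sum_le_sum_abs _ _).trans (Finset.sum_le_sum fun i hi => ?_)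
  rw [abs_mul]
  exact mul_le_of_le_one_right (abs_nonneg _) (sum_divInd ha hab (h1 i hi).1)

/-! ### Truncated inclusion–exclusion -/

/-- The coefficient `(-1)^|T|` truncated at `|T| ≤ k`. -/
def truncW (k : ℕ) (T : Finset ℕ) : ℝ := if T.card ≤ k then (-1) ^ T.card else 0

/-- The coefficient selecting the sets of size exactly `k + 1`. -/
def nextW (k : ℕ) (T : Finset ℕ) : ℝ := if T.card = k + 1 then 1 else 0

/-- Bonferroni's inequalities, for weights `a p ∈ [0, 1]`: the truncations of the expansion of
`∏ (1 - a p)` alternate around it. -/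
lemma bonferroni (a : ℕ → ℝ) (ha : ∀ p, 0 ≤ a p ∧ a p ≤ 1) (P : Finset ℕ) (k : ℕ) :
    0 ≤ (-1 : ℝ) ^ k * (∑ T ∈ P.powerset, truncW k T * ∏ p ∈ T, a p - ∏ p ∈ P, (1 - a p)) := by
  induction P using Finset.induction_on generalizing k with
  | empty => simp [truncW]
  | insert q s hq ih =>
    have hcard : ∀ T ∈ s.powerset, (insert q T).card = T.card + 1 ∧ q ∉ T := by
      intro T hT
      have : q ∉ T := fun h => hq (Finset.mem_powerset.1 hT h)
      exact ⟨Finset.card_insert_of_notMem this, this⟩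
    rw [Finset.sum_powerset_insert hq, Finset.prod_insert hq]
    rcases k with _ | k
    · have h0 : ∑ T ∈ s.powerset, truncW 0 (insert q T) * ∏ p ∈ insert q T, a p = 0 := by
        refine Finset.sum_eq_zero fun T hT => ?_
        simp [truncW, (hcard T hT).1]
      have h1 := ih 0
      have h2 : 0 ≤ ∏ p ∈ s, (1 - a p) := Finset.prod_nonneg fun p _ => by linarith [(ha p).2]
      rw [h0]
      simp only [pow_zero, one_mul] at h1 ⊢
      nlinarith [(ha q).1, mul_nonneg (ha q).1 h2]
    · have h0 : ∑ T ∈ s.powerset, truncW (k + 1) (insert q T) * ∏ p ∈ insert q T, a p =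
          - a q * ∑ T ∈ s.powerset, truncW k T * ∏ p ∈ T, a p := by
        rw [Finset.mul_sum]
        refine Finset.sum_congr rfl fun T hT => ?_
        rw [Finset.prod_insert (hcard T hT).2]
        simp only [truncW, (hcard T hT).1, add_le_add_iff_right]
        split_ifs
        · ring
        · ring
      rw [h0]
      have h1 := ih (k + 1)
      have h2 := mul_nonneg (ha q).1 (ih k)
      calc (0 : ℝ) ≤ _ := add_nonneg h1 h2
        _ = _ := by ring

lemma truncW_succ (k : ℕ) (T : Finset ℕ) :
    truncW (k + 1) T = truncW k T + (-1) ^ (k + 1) * nextW k T := by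
  unfold truncW nextW
  rcases lt_trichotomy T.card (k + 1) with h | h | h
  · rw [if_pos h.le, if_pos (by omega), if_neg h.ne]; ring
  · rw [if_pos h.le, if_neg (by omega), if_pos h, h]; ring
  · rw [if_neg (by omega), if_neg (by omega), if_neg h.ne']; ring

lemma trunc_even (a : ℕ → ℝ) (ha : ∀ p, 0 ≤ a p ∧ a p ≤ 1) (P : Finset ℕ) {k : ℕ} (hk : Even k) :
    ∏ p ∈ P, (1 - a p) ≤ ∑ T ∈ P.powerset, truncW k T * ∏ p ∈ T, a p ∧
    ∑ T ∈ P.powerset, truncW k T * ∏ p ∈ T, a p ≤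
      ∏ p ∈ P, (1 - a p) + ∑ T ∈ P.powerset, nextW k T * ∏ p ∈ T, a p := by
  have h1 := bonferroni a ha P k
  have h2 := bonferroni a ha P (k + 1)
  rw [hk.neg_one_pow] at h1
  have h3 : ∑ T ∈ P.powerset, truncW (k + 1) T * ∏ p ∈ T, a p =
      ∑ T ∈ P.powerset, truncW k T * ∏ p ∈ T, a p
        - ∑ T ∈ P.powerset, nextW k T * ∏ p ∈ T, a p := by
    rw [← Finset.sum_sub_distrib]
    refine Finset.sum_congr rfl fun T _ => ?_
    rw [truncW_succ, hk.add_one.neg_one_pow]; ring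
  rw [hk.add_one.neg_one_pow, h3] at h2
  constructor <;> linarith

lemma sum_abs_trunc (P : Finset ℕ) (k : ℕ) :
    ∑ T ∈ P.powerset, |truncW k T| ≤ ((1 : ℝ) + P.card) ^ k := by
  have hw : ∀ k T, |truncW k T| = if T.card ≤ k then 1 else 0 := by
    intro k T
    unfold truncW
    split_ifs <;> simp
  simp only [hw]
  induction P using Finset.induction_on generalizing k with
  | empty => rw [Finset.powerset_empty, Finset.sum_singleton]; simp
  | insert q s hq ih =>
    have hcard : ∀ T ∈ s.powerset, (insert q T).card = T.card + 1 := by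
      intro T hT
      exact Finset.card_insert_of_notMem fun h => hq (Finset.mem_powerset.1 hT h)
    rw [Finset.sum_powerset_insert hq, Finset.card_insert_of_notMem hq]
    have hrw : ∑ T ∈ s.powerset, (if (insert q T).card ≤ k then (1 : ℝ) else 0) =
        ∑ T ∈ s.powerset, (if T.card + 1 ≤ k then (1 : ℝ) else 0) :=
      Finset.sum_congr rfl fun T hT => by rw [hcard T hT]
    rw [hrw]
    rcases k with _ | k
    · simp
    · simp only [add_le_add_iff_right]
      refine (add_le_add (ih (k + 1)) (ih k)).trans ?_
      have h1 : ((1 : ℝ) + s.card) ^ k ≤ (1 + ((s.card + 1 : ℕ) : ℝ)) ^ k := by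
        gcongr; simp
      have h0 : (0 : ℝ) ≤ s.card := Nat.cast_nonneg _
      rw [pow_succ, pow_succ]
      push_cast at h1 ⊢
      nlinarith

lemma sum_abs_trunc_add_next (P : Finset ℕ) (k : ℕ) :
    ∑ T ∈ P.powerset, |truncW k T| + ∑ T ∈ P.powerset, |nextW k T| ≤ ((1 : ℝ) + P.card) ^ (k + 1) := by
  refine le_trans (le_of_eq ?_) (sum_abs_trunc P (k + 1))
  rw [← Finset.sum_add_distrib]
  refine Finset.sum_congr rfl fun T _ => ?_
  unfold truncW nextW
  rcases lt_trichotomy T.card (k + 1) with h | h | h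
  · rw [if_pos h.le, if_pos (by omega), if_neg h.ne]; simp
  · rw [if_pos h.le, if_neg (by omega), if_pos h]; simp
  · rw [if_neg (by omega), if_neg h.ne', if_neg (by omega)]; simp

/-- Rankin's trick: `σ_{k+1}(a) ≤ 2^{-(k+1)} ∏ (1 + 2 a p) ≤ 2^{-(k+1)} exp (2 ∑ a p)`. -/
lemma sum_next_le (a : ℕ → ℝ) (ha : ∀ p, 0 ≤ a p) (P : Finset ℕ) (k : ℕ) :
    ∑ T ∈ P.powerset, nextW k T * ∏ p ∈ T, a p ≤
      (1 / 2) ^ (k + 1) * Real.exp (2 * ∑ p ∈ P, a p) := by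
  calc ∑ T ∈ P.powerset, nextW k T * ∏ p ∈ T, a p
      ≤ ∑ T ∈ P.powerset, (1 / 2 : ℝ) ^ (k + 1) * ∏ p ∈ T, (2 * a p) := by
        refine Finset.sum_le_sum fun T _ => ?_
        have h0 : 0 ≤ ∏ p ∈ T, (2 * a p) := Finset.prod_nonneg fun p _ => by linarith [ha p]
        unfold nextW
        split_ifs with h
        · rw [Finset.prod_mul_distrib, Finset.prod_const, h, ← mul_assoc, ← mul_pow]
          norm_num
        · rw [zero_mul]; positivity
    _ = (1 / 2 : ℝ) ^ (k + 1) * ∏ p ∈ P, (1 + 2 * a p) := by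
        rw [← Finset.mul_sum, Finset.prod_one_add]
    _ ≤ _ := by
        rw [Finset.mul_sum, Real.exp_sum]
        refine mul_le_mul_of_nonneg_left (Finset.prod_le_prod (fun p _ => ?_) fun p _ => ?_)
          (by positivity)
        · linarith [ha p]
        · linarith [Real.add_one_le_exp (2 * a p)]

/-! ### The Brun–Hooley sieve -/

/-- Density `∏_{p ∈ P} (1 - 1/p)` of the integers free of primes of `P`. -/
def sieveDensity (P : Finset ℕ) : ℝ := ∏ p ∈ P, (1 - 1 / (p : ℝ))

/-- Indicator that `n` has no divisor in `P`, as a product. -/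
def sieveInd (P : Finset ℕ) (n : ℕ) : ℝ := ∏ p ∈ P, (1 - divInd n p)

lemma divInd_mem (n p : ℕ) : 0 ≤ divInd n p ∧ divInd n p ≤ 1 := by
  unfold divInd; split_ifs <;> norm_num

lemma one_div_mem (p : ℕ) : 0 ≤ 1 / (p : ℝ) ∧ 1 / (p : ℝ) ≤ 1 := by
  refine ⟨by positivity, ?_⟩
  rcases Nat.eq_zero_or_pos p with rfl | h
  · simp
  · rw [div_le_one (by exact_mod_cast h)]
    exact_mod_cast h

lemma sieveInd_nonneg (P : Finset ℕ) (n : ℕ) : 0 ≤ sieveInd P n :=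
  Finset.prod_nonneg fun p _ => by linarith [(divInd_mem n p).2]

lemma sieveInd_le_one (P : Finset ℕ) (n : ℕ) : sieveInd P n ≤ 1 :=
  Finset.prod_le_one (fun p _ => by linarith [(divInd_mem n p).2])
    fun p _ => by linarith [(divInd_mem n p).1]

lemma sieveDensity_nonneg (P : Finset ℕ) : 0 ≤ sieveDensity P :=
  Finset.prod_nonneg fun p _ => by linarith [(one_div_mem p).2]

/-- The Brun–Hooley sieve: with the primes split into the blocks `P j`, a lower and an upper
divisor-sum bound for the sieve indicator of the first `t` blocks. If `y j ≥ x j` are the even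
truncations of the block indicators `x j` and `e j ≥ y j - x j` their next terms, the upper bound
is `∏ y j`, and the lower bound satisfies `L' = L * y t - U * e t`. -/
lemma brun_hooley (P : ℕ → Finset ℕ) (hP : ∀ j, ∀ p ∈ P j, p.Prime)
    (hdisj : ∀ i j, i < j → Disjoint (P i) (P j)) (k : ℕ → ℕ) (hk : ∀ j, Even (k j))
    (a W : ℕ → ℝ) (ha : ∀ j, 0 ≤ a j) (hW : ∀ j, ((1 : ℝ) + (P j).card) ^ (k j + 1) ≤ W j)
    (hE : ∀ j, ∑ T ∈ (P j).powerset, nextW (k j) T * ∏ p ∈ T, (1 / (p : ℝ)) ≤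
      a j * sieveDensity (P j)) (t : ℕ)
    (ht : ∏ j ∈ Finset.range t, (1 + a j) ≤ 2) :
    ∃ (L U : ℕ → ℝ) (l u : ℝ),
      DivSum {p | ∃ j < t, p ∈ P j} L l (∏ j ∈ Finset.range t, W j) ∧
      DivSum {p | ∃ j < t, p ∈ P j} U u (∏ j ∈ Finset.range t, W j) ∧
      (∀ n, L n ≤ ∏ j ∈ Finset.range t, sieveInd (P j) n ∧
        ∏ j ∈ Finset.range t, sieveInd (P j) n ≤ U n) ∧
      (∏ j ∈ Finset.range t, sieveDensity (P j)) * (2 - ∏ j ∈ Finset.range t, (1 + a j)) ≤ l ∧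
      0 ≤ u ∧
      u ≤ (∏ j ∈ Finset.range t, sieveDensity (P j)) * ∏ j ∈ Finset.range t, (1 + a j) := by
  induction t with
  | zero =>
    refine ⟨fun _ => 1, fun _ => 1, 1, 1, ?_, ?_, ?_, ?_, ?_, ?_⟩
    · exact DivSum.one.mono (Set.empty_subset _) (by simp)
    · exact DivSum.one.mono (Set.empty_subset _) (by simp)
    · simp
    · norm_num
    · norm_num
    · simp
  | succ t ih =>
    have hW0 : ∀ j, 0 ≤ W j := fun j => le_trans (by positivity) (hW j)
    have hWp : 0 ≤ ∏ j ∈ Finset.range t, W j := Finset.prod_nonneg fun j _ => hW0 j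
    have hPi1 : 1 ≤ ∏ j ∈ Finset.range t, (1 + a j) := by
      have h := Finset.prod_le_prod (s := Finset.range t) (f := fun _ => (1 : ℝ))
        (g := fun j => 1 + a j) (fun _ _ => zero_le_one) fun j _ => by linarith [ha j]
      simpa using h
    have ht' : ∏ j ∈ Finset.range t, (1 + a j) ≤ 2 := by
      rw [Finset.prod_range_succ] at ht
      nlinarith [ha t]
    obtain ⟨L, U, l, u, hL, hU, hLU, hl, hu0, hu⟩ := ih ht'
    have hV0 : 0 ≤ ∏ j ∈ Finset.range t, sieveDensity (P j) :=
      Finset.prod_nonneg fun j _ => sieveDensity_nonneg _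
    have hX0 : ∀ n, 0 ≤ ∏ j ∈ Finset.range t, sieveInd (P j) n := fun n =>
      Finset.prod_nonneg fun j _ => sieveInd_nonneg _ n
    simp only [Finset.prod_range_succ]
    have hy := DivSum.powerset (hP t) (truncW (k t))
    have he := DivSum.powerset (hP t) (nextW (k t))
    have hcount := (sum_abs_trunc_add_next (P t) (k t)).trans (hW t)
    have hn0 : 0 ≤ ∑ T ∈ (P t).powerset, |nextW (k t) T| :=
      Finset.sum_nonneg fun _ _ => abs_nonneg _
    have hd : Disjoint {p | ∃ j < t, p ∈ P j} (P t : Set ℕ) := by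
      rw [Set.disjoint_left]
      rintro p ⟨j, hj, hpj⟩ hp
      exact Finset.disjoint_left.1 (hdisj j t hj) hpj hp
    have hsub : {p | ∃ j < t, p ∈ P j} ∪ (P t : Set ℕ) ⊆ {p | ∃ j < t + 1, p ∈ P j} := by
      rintro p (⟨j, hj, hp⟩ | hp)
      · exact ⟨j, by omega, hp⟩
      · exact ⟨t, by omega, hp⟩
    have hpt : ∀ n, sieveInd (P t) n ≤ _ ∧ _ ≤ sieveInd (P t) n + _ := fun n =>
      trunc_even (divInd n) (divInd_mem n) (P t) (hk t)
    have hnum : sieveDensity (P t) ≤ _ ∧ _ ≤ sieveDensity (P t) + _ :=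
      trunc_even (fun p => 1 / (p : ℝ)) one_div_mem (P t) (hk t)
    have hEt := hE t
    have he0 : 0 ≤ ∑ T ∈ (P t).powerset, nextW (k t) T * ∏ p ∈ T, (1 / (p : ℝ)) := by
      refine Finset.sum_nonneg fun T _ => mul_nonneg ?_ (Finset.prod_nonneg fun p _ => by positivity)
      unfold nextW; split_ifs <;> norm_num
    refine ⟨_, _, _, _, (((hL.mul hy hd).sub (hU.mul he hd)).mono hsub ?_),
      ((hU.mul hy hd).mono hsub ?_), ?_, ?_, ?_, ?_⟩
    · rw [← mul_add]
      exact mul_le_mul_of_nonneg_left hcount hWp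
    · exact mul_le_mul_of_nonneg_left (by linarith) hWp
    · intro n
      obtain ⟨h1, h2⟩ := hLU n
      obtain ⟨h3, h4⟩ := hpt n
      have h5 := sieveInd_nonneg (P t) n
      have h6 := hX0 n
      constructor
      · nlinarith [mul_le_mul_of_nonneg_right h1 (h5.trans h3),
          mul_le_mul h2 (sub_le_iff_le_add'.2 h4) (sub_nonneg.2 h3) (h6.trans h2)]
      · exact mul_le_mul h2 h3 h5 (h6.trans h2)
    · obtain ⟨h3, h4⟩ := hnum
      have h5 := sieveDensity_nonneg (P t)
      set V := ∏ j ∈ Finset.range t, sieveDensity (P j)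
      set Q := ∏ j ∈ Finset.range t, (1 + a j)
      have h7 : V * (2 - Q) * sieveDensity (P t) ≤ l * _ :=
        mul_le_mul hl h3 h5 ((mul_nonneg hV0 (by linarith)).trans hl)
      have h8 := mul_le_mul hu hEt he0 (hu0.trans hu)
      refine le_trans (le_of_eq ?_) (sub_le_sub h7 h8)
      ring
    · exact mul_nonneg hu0 ((sieveDensity_nonneg _).trans hnum.1)
    · obtain ⟨h3, h4⟩ := hnum
      have h8 := mul_le_mul hu (h4.trans (add_le_add_right hEt _))
        ((sieveDensity_nonneg _).trans h3) (hu0.trans hu)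
      refine h8.trans (le_of_eq ?_)
      ring

/-! ### Chebyshev bounds for the blocks -/

/-- Dyadic Chebyshev bound, from `∏_{p ≤ 2^(i+1)} p ≤ 4 ^ 2^(i+1)`. -/
lemma sum_dyadic_le (i : ℕ) (hi : 1 ≤ i) (S : Finset ℕ)
    (hS : ∀ p ∈ S, p.Prime ∧ 2 ^ i ≤ p ∧ p < 2 ^ (i + 1)) :
    ∑ p ∈ S, 1 / (p : ℝ) ≤ 4 / i := by
  have h1 : (2 ^ i) ^ S.card ≤ 4 ^ (2 ^ (i + 1)) := by
    calc (2 ^ i) ^ S.card = ∏ _p ∈ S, 2 ^ i := by rw [Finset.prod_const]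
      _ ≤ ∏ p ∈ S, p := Finset.prod_le_prod' fun p hp => (hS p hp).2.1
      _ ≤ primorial (2 ^ (i + 1)) := by
          unfold primorial
          refine Finset.prod_le_prod_of_subset_of_one_le' ?_ ?_
          · intro p hp
            obtain ⟨h, _, h'⟩ := hS p hp
            simp only [Finset.mem_filter, Finset.mem_range]
            exact ⟨by omega, h⟩
          · intro p hp _
            exact (Finset.mem_filter.1 hp).2.one_lt.le
      _ ≤ _ := primorial_le_four_pow _
  have h2 : i * S.card ≤ 4 * 2 ^ i := by
    rw [← pow_mul, show (4 : ℕ) = 2 ^ 2 by norm_num, ← pow_mul] at h1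
    have h3 := (Nat.pow_le_pow_iff_right (by norm_num)).1 h1
    calc i * S.card ≤ 2 * 2 ^ (i + 1) := h3
      _ = _ := by ring
  have hi' : (0 : ℝ) < i := by exact_mod_cast hi
  have h4 : ∑ p ∈ S, 1 / (p : ℝ) ≤ S.card * (1 / 2 ^ i) := by
    rw [← nsmul_eq_mul]
    refine Finset.sum_le_card_nsmul _ _ _ fun p hp => ?_
    apply one_div_le_one_div_of_le (by positivity)
    exact_mod_cast (hS p hp).2.1
  refine h4.trans ?_
  rw [le_div_iff₀ hi']
  have h5 : (i : ℝ) * S.card ≤ 4 * 2 ^ i := by exact_mod_cast h2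
  have h6 : (0 : ℝ) < 2 ^ i := by positivity
  rw [mul_one_div, div_mul_eq_mul_div, div_le_iff₀ h6]
  linarith

lemma sum_block_le (w : ℝ) (hw0 : 0 ≤ w) (S : Finset ℕ)
    (hS : ∀ p ∈ S, p.Prime ∧ w ≤ p ∧ (p : ℝ) < w ^ 2) : ∑ p ∈ S, 1 / (p : ℝ) ≤ 12 := by
  -- `i₀ = ⌊log₂ w⌋`, raised to `1` when `w < 2`; the block lies in `[2^i₀, 2^(2 i₀ + 2))`.
  obtain ⟨i₀, hi₀, hlow, hup⟩ : ∃ i₀ : ℕ, 1 ≤ i₀ ∧ (∀ p ∈ S, 2 ^ i₀ ≤ p) ∧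
      ∀ p ∈ S, p < 2 ^ (2 * i₀ + 2) := by
    rcases lt_or_ge w 2 with hw | hw
    · refine ⟨1, le_rfl, fun p hp => ?_, fun p hp => ?_⟩
      · simpa using (hS p hp).1.two_le
      · obtain ⟨h1, h2, h3⟩ := hS p hp
        have : (p : ℝ) < 4 := h3.trans_le (by nlinarith)
        have : p < 4 := by exact_mod_cast this
        norm_num; omega
    · have h1 : 1 ≤ ⌊w⌋₊ := Nat.le_floor (by norm_num; linarith)
      have h2 := Nat.pow_log_le_self 2 (show ⌊w⌋₊ ≠ 0 by omega)
      have h3 := Nat.lt_pow_succ_log_self (b := 2) (by norm_num) ⌊w⌋₊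
      refine ⟨Nat.log 2 ⌊w⌋₊, ?_, fun p hp => ?_, fun p hp => ?_⟩
      · exact Nat.log_pos (by norm_num) (Nat.le_floor (by simpa using hw))
      · refine h2.trans ?_
        have := Nat.floor_mono (hS p hp).2.1
        simpa using this
      · have h4 : w < 2 ^ (Nat.log 2 ⌊w⌋₊ + 1) := by
          have h5 : ((⌊w⌋₊ + 1 : ℕ) : ℝ) ≤ ((2 ^ (Nat.log 2 ⌊w⌋₊).succ : ℕ) : ℝ) := by
            exact_mod_cast h3
          push_cast at h5
          exact (Nat.lt_floor_add_one w).trans_le h5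
        have h6 : (p : ℝ) < 2 ^ (2 * Nat.log 2 ⌊w⌋₊ + 2) := by
          refine (hS p hp).2.2.trans ?_
          calc w ^ 2 < (2 ^ (Nat.log 2 ⌊w⌋₊ + 1)) ^ 2 := by gcongr
            _ = _ := by rw [← pow_mul]; congr 1; ring
        exact_mod_cast h6
  have hmaps : ∀ p ∈ S, Nat.log 2 p ∈ Finset.Ico i₀ (2 * i₀ + 2) := by
    intro p hp
    rw [Finset.mem_Ico]
    exact ⟨Nat.le_log_of_pow_le (by norm_num) (hlow p hp),
      Nat.log_lt_of_lt_pow (hS p hp).1.ne_zero (hup p hp)⟩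
  rw [← Finset.sum_fiberwise_of_maps_to hmaps]
  have hi' : (0 : ℝ) < i₀ := by exact_mod_cast hi₀
  have hb : ∀ i ∈ Finset.Ico i₀ (2 * i₀ + 2),
      ∑ p ∈ S.filter (fun p => Nat.log 2 p = i), 1 / (p : ℝ) ≤ 4 / i₀ := by
    intro i hi
    have hi1 := (Finset.mem_Ico.1 hi).1
    refine (sum_dyadic_le i (hi₀.trans hi1) _ fun p hp => ?_).trans ?_
    · obtain ⟨hpS, rfl⟩ := Finset.mem_filter.1 hp
      exact ⟨(hS p hpS).1, Nat.pow_log_le_self 2 (hS p hpS).1.ne_zero,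
        Nat.lt_pow_succ_log_self (by norm_num) p⟩
    · gcongr
  refine (Finset.sum_le_card_nsmul _ _ _ hb).trans ?_
  rw [Nat.card_Ico, nsmul_eq_mul, show 2 * i₀ + 2 - i₀ = i₀ + 2 by omega]
  push_cast
  rw [mul_div_assoc', div_le_iff₀ hi']
  have : (1 : ℝ) ≤ i₀ := by exact_mod_cast hi₀
  linarith

/-- `∏ (1 - 1/p)⁻¹ ≤ exp (2 ∑ 1/p)`. -/
lemma one_le_density_mul_exp (P : Finset ℕ) (hP : ∀ p ∈ P, p.Prime) :
    1 ≤ sieveDensity P * Real.exp (2 * ∑ p ∈ P, 1 / (p : ℝ)) := by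
  unfold sieveDensity
  rw [Finset.mul_sum, Real.exp_sum, ← Finset.prod_mul_distrib]
  have h := Finset.prod_le_prod (s := P) (f := fun _ => (1 : ℝ))
    (g := fun p : ℕ => (1 - 1 / (p : ℝ)) * Real.exp (2 * (1 / (p : ℝ)))) (fun _ _ => zero_le_one) ?_
  · simpa using h
  · intro p hp
    have h2 : (2 : ℝ) ≤ p := by exact_mod_cast (hP p hp).two_le
    have h3 : 1 / (p : ℝ) ≤ 1 / 2 := one_div_le_one_div_of_le (by norm_num) h2
    have h4 := (one_div_mem p).1
    have h5 := Real.add_one_le_exp (2 * (1 / (p : ℝ)))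
    nlinarith

lemma density_pos (P : Finset ℕ) (hP : ∀ p ∈ P, p.Prime) : 0 < sieveDensity P := by
  refine Finset.prod_pos fun p hp => ?_
  have h2 : (2 : ℝ) ≤ p := by exact_mod_cast (hP p hp).two_le
  have h3 : 1 / (p : ℝ) ≤ 1 / 2 := one_div_le_one_div_of_le (by norm_num) h2
  linarith

/-- Hypothesis on the size of the next terms in `brun_hooley`, for a block `[w, w²)`. -/
lemma next_le_density (w : ℝ) (hw0 : 0 ≤ w) (S : Finset ℕ)
    (hS : ∀ p ∈ S, p.Prime ∧ w ≤ p ∧ (p : ℝ) < w ^ 2) (k : ℕ) :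
    ∑ T ∈ S.powerset, nextW k T * ∏ p ∈ T, (1 / (p : ℝ)) ≤
      ((1 / 2) ^ (k + 1) * Real.exp 48) * sieveDensity S := by
  have h1 := sum_next_le (fun p => 1 / (p : ℝ)) (fun p => (one_div_mem p).1) S k
  have h2 := sum_block_le w hw0 S hS
  have h3 := one_le_density_mul_exp S fun p hp => (hS p hp).1
  have h4 : Real.exp (2 * ∑ p ∈ S, 1 / (p : ℝ)) ≤ Real.exp 24 := Real.exp_le_exp.2 (by linarith)
  have h5 : 1 ≤ sieveDensity S * Real.exp 24 :=
    h3.trans (mul_le_mul_of_nonneg_left h4 (sieveDensity_nonneg _))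
  have h6 : Real.exp 48 = Real.exp 24 * Real.exp 24 := by rw [← Real.exp_add]; norm_num
  have h7 : (0 : ℝ) ≤ (1 / 2) ^ (k + 1) * Real.exp 24 := by positivity
  refine h1.trans ((mul_le_mul_of_nonneg_left h4 (by positivity)).trans ?_)
  rw [h6]
  nlinarith

/-! ### The sieve for primes `p < z`, `p ∤ q` -/

/-- The primes `p < z` not dividing `q`. -/
def sievePrimes (q : ℕ) (z : ℝ) : Finset ℕ :=
  (Finset.range ⌈z⌉₊).filter (fun p : ℕ => p.Prime ∧ ¬ p ∣ q)

/-- The cut points `z^(2^{-j})` of the blocks. -/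
def cutPt (z : ℝ) (j : ℕ) : ℝ := z ^ ((1 / 2 : ℝ) ^ j)

/-- The block of sieving primes in `[z^(2^{-(j+1)}), z^(2^{-j}))`. -/
def block (q : ℕ) (z : ℝ) (j : ℕ) : Finset ℕ :=
  (sievePrimes q z).filter fun p => cutPt z (j + 1) ≤ p ∧ (p : ℝ) < cutPt z j

lemma cutPt_sq {z : ℝ} (hz : 1 ≤ z) (j : ℕ) : cutPt z (j + 1) ^ 2 = cutPt z j := by
  unfold cutPt
  rw [← Real.rpow_natCast, ← Real.rpow_mul (by linarith)]
  congr 1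
  rw [pow_succ]; push_cast; ring

lemma one_le_cutPt {z : ℝ} (hz : 1 ≤ z) (j : ℕ) : 1 ≤ cutPt z j :=
  Real.one_le_rpow hz (by positivity)

lemma cutPt_anti {z : ℝ} (hz : 1 ≤ z) : Antitone (cutPt z) := by
  refine antitone_nat_of_succ_le fun j => ?_
  rw [← cutPt_sq hz j]
  nlinarith [one_le_cutPt hz (j + 1)]

lemma exists_cutPt_le {z : ℝ} (hz : 1 ≤ z) : ∃ t, cutPt z t ≤ 2 := by
  obtain ⟨t, ht⟩ := exists_nat_ge z
  refine ⟨t, ?_⟩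
  have h1 : z ≤ (2 : ℝ) ^ (2 ^ t) := by
    have h2 : t ≤ 2 ^ (2 ^ t) := Nat.lt_two_pow_self.le.trans Nat.lt_two_pow_self.le
    exact ht.trans (by exact_mod_cast h2)
  unfold cutPt
  calc z ^ ((1 / 2 : ℝ) ^ t) ≤ ((2 : ℝ) ^ (2 ^ t)) ^ ((1 / 2 : ℝ) ^ t) :=
        Real.rpow_le_rpow (by linarith) h1 (by positivity)
    _ = 2 := by
        rw [← Real.rpow_natCast, ← Real.rpow_mul (by norm_num)]
        push_cast
        rw [← mul_pow]
        norm_num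

lemma mem_block {q : ℕ} {z : ℝ} {j p : ℕ} (h : p ∈ block q z j) :
    p.Prime ∧ ¬ p ∣ q ∧ cutPt z (j + 1) ≤ p ∧ (p : ℝ) < cutPt z j := by
  obtain ⟨h1, h2⟩ := Finset.mem_filter.1 h
  obtain ⟨_, h3, h4⟩ := Finset.mem_filter.1 h1
  exact ⟨h3, h4, h2⟩

lemma card_block_le (q : ℕ) {z : ℝ} (hz : 1 ≤ z) (j : ℕ) :
    (1 : ℝ) + (block q z j).card ≤ cutPt z j := by
  have h1 : 1 ∉ block q z j := fun h => Nat.not_prime_one (mem_block h).1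
  have h2 : insert 1 (block q z j) ⊆ Finset.Icc 1 ⌊cutPt z j⌋₊ := by
    intro p hp
    rw [Finset.mem_Icc]
    rcases Finset.mem_insert.1 hp with rfl | hp
    · exact ⟨le_rfl, Nat.le_floor (by simpa using one_le_cutPt hz j)⟩
    · obtain ⟨h3, _, _, h4⟩ := mem_block hp
      exact ⟨h3.one_lt.le, Nat.le_floor h4.le⟩
  have h3 := Finset.card_le_card h2
  rw [Finset.card_insert_of_notMem h1, Nat.card_Icc, Nat.add_sub_cancel] at h3
  have h4 : (((block q z j).card + 1 : ℕ) : ℝ) ≤ ⌊cutPt z j⌋₊ := by exact_mod_cast h3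
  have h5 := Nat.floor_le (zero_le_one.trans (one_le_cutPt hz j))
  push_cast at h4
  linarith

lemma prod_blocks (q : ℕ) {z : ℝ} (hz : 1 ≤ z) (f : ℕ → ℝ) (t : ℕ) :
    ∏ j ∈ Finset.range t, ∏ p ∈ block q z j, f p =
      ∏ p ∈ (sievePrimes q z).filter (fun p : ℕ => cutPt z t ≤ p), f p := by
  induction t with
  | zero =>
    rw [Finset.range_zero, Finset.prod_empty, Finset.filter_false_of_mem, Finset.prod_empty]
    intro p hp
    have h := Finset.mem_range.1 (Finset.mem_filter.1 hp).1
    simpa [cutPt] using Nat.lt_ceil.1 h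
  | succ t ih =>
    rw [Finset.prod_range_succ, ih, ← Finset.prod_union]
    · congr 1
      ext p
      have := cutPt_anti hz (Nat.le_succ t)
      simp only [Finset.mem_union, Finset.mem_filter, block]
      constructor
      · rintro (⟨h1, h2⟩ | ⟨h1, h2, _⟩)
        · exact ⟨h1, this.trans h2⟩
        · exact ⟨h1, h2⟩
      · rintro ⟨h1, h2⟩
        rcases le_or_gt (cutPt z t) p with h | h
        · exact Or.inl ⟨h1, h⟩
        · exact Or.inr ⟨h1, h2, h⟩
    · rw [Finset.disjoint_left]
      intro p hp hp'
      exact absurd (mem_block hp').2.2.2 (not_lt.2 (Finset.mem_filter.1 hp).2)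

lemma prod_weights {z : ℝ} (hz : 1 ≤ z) (m t : ℕ) :
    ∏ j ∈ Finset.range t, cutPt z j ^ (2 * (m + j) + 1) =
      z ^ ((4 * m + 6 : ℝ) - (4 * m + 4 * t + 6) * (1 / 2) ^ t) := by
  induction t with
  | zero => simp
  | succ t ih =>
    rw [Finset.prod_range_succ, ih]
    unfold cutPt
    rw [← Real.rpow_natCast _ (2 * (m + t) + 1), ← Real.rpow_mul (by linarith), ← Real.rpow_add (by linarith)]
    congr 1
    push_cast
    rw [pow_succ]; ring

lemma sum_geom_aux (m t : ℕ) :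
    ∑ j ∈ Finset.range t, (1 / 2 : ℝ) ^ (2 * (m + j) + 1) =
      (1 / 4) ^ m * (2 / 3) * (1 - (1 / 4) ^ t) := by
  induction t with
  | zero => simp
  | succ t ih =>
    rw [Finset.sum_range_succ, ih, pow_succ (1 / 2 : ℝ) (2 * (m + t)), pow_mul, pow_add]
    norm_num [pow_succ]
    ring

/-- A form of the fundamental lemma: a lower-bound divisor sum for the sieve by the primes
`p < z`, `p ∤ q`, of level `z^(4m+6)` and with relative loss exponentially small in `m`. -/
lemma sieve_minorant (q : ℕ) {z : ℝ} (hz : 1 ≤ z) (m : ℕ) (δ : ℝ) (hδ : δ ≤ 1)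
    (hm : Real.exp (Real.exp 48 * (1 / 4) ^ m) ≤ 1 + δ) :
    ∃ (L : ℕ → ℝ) (l : ℝ), DivSum {p | ¬ p ∣ q} L l (z ^ (4 * m + 6)) ∧
      (∀ n, L n ≤ sieveInd (sievePrimes q z) n) ∧
      sieveDensity (sievePrimes q z) * (1 - δ) ≤ l := by
  obtain ⟨t, ht⟩ := exists_cutPt_le hz
  have hprod : ∀ f : ℕ → ℝ, ∏ j ∈ Finset.range t, ∏ p ∈ block q z j, f p =
      ∏ p ∈ sievePrimes q z, f p := by
    intro f
    rw [prod_blocks q hz f t, Finset.filter_true_of_mem]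
    intro p hp
    refine ht.trans ?_
    exact_mod_cast (Finset.mem_filter.1 hp).2.1.two_le
  have ha : ∏ j ∈ Finset.range t, (1 + (1 / 2) ^ (2 * (m + j) + 1) * Real.exp 48) ≤ 1 + δ := by
    refine le_trans ?_ hm
    calc ∏ j ∈ Finset.range t, (1 + (1 / 2) ^ (2 * (m + j) + 1) * Real.exp 48)
        ≤ ∏ j ∈ Finset.range t, Real.exp ((1 / 2) ^ (2 * (m + j) + 1) * Real.exp 48) := by
          refine Finset.prod_le_prod (fun j _ => by positivity) fun j _ => ?_
          rw [add_comm]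
          exact Real.add_one_le_exp _
      _ = Real.exp (∑ j ∈ Finset.range t, (1 / 2) ^ (2 * (m + j) + 1) * Real.exp 48) :=
          (Real.exp_sum _ _).symm
      _ ≤ _ := by
          rw [← Finset.sum_mul, sum_geom_aux, mul_comm]
          refine Real.exp_le_exp.2 (mul_le_mul_of_nonneg_left ?_ (Real.exp_pos _).le)
          have h1 : (0 : ℝ) < (1 / 4) ^ m := by positivity
          have h2 : (0 : ℝ) < (1 / 4) ^ t := by positivity
          nlinarith [mul_pos h1 h2]
  obtain ⟨L, U, l, u, hL, -, hLU, hl, -, -⟩ := brun_hooley (block q z)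
    (fun j p hp => (mem_block hp).1) (by
      intro i j hij
      rw [Finset.disjoint_left]
      intro p hp hp'
      have h1 := (mem_block hp).2.2.1
      have h2 := (mem_block hp').2.2.2
      exact absurd h2 (not_lt.2 ((cutPt_anti hz hij).trans h1)))
    (fun j => 2 * (m + j)) (fun j => even_two_mul _)
    (fun j => (1 / 2) ^ (2 * (m + j) + 1) * Real.exp 48)
    (fun j => cutPt z j ^ (2 * (m + j) + 1)) (fun j => by positivity)
    (fun j => pow_le_pow_left₀ (by positivity) (card_block_le q hz j) _)
    (fun j => next_le_density (cutPt z (j + 1)) (zero_le_one.trans (one_le_cutPt hz _)) _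
      (fun p hp => by
        obtain ⟨h1, h2, h3, h4⟩ := mem_block hp
        exact ⟨h1, h3, by rwa [cutPt_sq hz]⟩) _) t (ha.trans (by linarith))
  refine ⟨L, l, hL.mono ?_ ?_, fun n => ?_, ?_⟩
  · rintro p ⟨j, _, hp⟩
    exact (mem_block hp).2.1
  · rw [prod_weights hz, ← Real.rpow_natCast z (4 * m + 6)]
    refine Real.rpow_le_rpow_of_exponent_le hz ?_
    push_cast
    have : (0 : ℝ) ≤ (4 * m + 4 * t + 6) * (1 / 2) ^ t := by positivity
    linarith
  · refine (hLU n).1.trans (le_of_eq ?_)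
    exact hprod _
  · have h1 : ∏ j ∈ Finset.range t, sieveDensity (block q z j) =
        sieveDensity (sievePrimes q z) := hprod _
    rw [h1] at hl
    refine le_trans (mul_le_mul_of_nonneg_left ?_ (sieveDensity_nonneg _)) hl
    linarith

/-- The indicator of `gcd(n, q) = 1` as a divisor sum. -/
lemma divSum_coprime (q : ℕ) :
    DivSum {p | p ∣ q} (sieveInd q.primeFactors) (sieveDensity q.primeFactors)
      (2 ^ q.primeFactors.card) := by
  have h := DivSum.powerset (P := q.primeFactors) (fun p hp => Nat.prime_of_mem_primeFactors hp)
    (fun T => (-1) ^ T.card)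
  have hexp : ∀ a : ℕ → ℝ, ∏ p ∈ q.primeFactors, (1 - a p) =
      ∑ T ∈ q.primeFactors.powerset, (-1) ^ T.card * ∏ p ∈ T, a p := by
    intro a
    simp only [sub_eq_add_neg]
    rw [Finset.prod_one_add]
    exact Finset.sum_congr rfl fun T _ => Finset.prod_neg _
  have h1 : sieveInd q.primeFactors = fun n => ∑ T ∈ q.primeFactors.powerset,
      (-1) ^ T.card * ∏ p ∈ T, divInd n p := by
    funext n
    exact hexp _
  have h2 : sieveDensity q.primeFactors = ∑ T ∈ q.primeFactors.powerset,
      (-1) ^ T.card * ∏ p ∈ T, (1 / (p : ℝ)) := hexp _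
  rw [h1, h2]
  refine h.mono (fun p hp => Nat.dvd_of_mem_primeFactors hp) (le_of_eq ?_)
  simp

/-! ### The sifted set in the interval -/

lemma sieveInd_eq_zero {P : Finset ℕ} {n p : ℕ} (hp : p ∈ P) (h : p ∣ n) : sieveInd P n = 0 :=
  Finset.prod_eq_zero hp (by simp [divInd, h])

lemma sieveInd_eq_one {P : Finset ℕ} {n : ℕ} (h : ∀ p ∈ P, ¬ p ∣ n) : sieveInd P n = 1 :=
  Finset.prod_eq_one fun p hp => by simp [divInd, h p hp]

lemma sieveInd_primeFactors {q : ℕ} (hq : q ≠ 0) (n : ℕ) :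
    sieveInd q.primeFactors n = if Nat.Coprime n q then 1 else 0 := by
  split_ifs with h
  · refine sieveInd_eq_one fun p hp hpn => ?_
    exact (Nat.prime_of_mem_primeFactors hp).one_lt.ne'
      (Nat.eq_one_of_dvd_coprimes h hpn (Nat.dvd_of_mem_primeFactors hp))
  · obtain ⟨p, hp, h1, h2⟩ := Nat.Prime.not_coprime_iff_dvd.1 h
    exact sieveInd_eq_zero (Nat.mem_primeFactors.2 ⟨hp, h2, hq⟩) h1

lemma mertensFactor_eq (q : ℕ) (z : ℝ) :
    mertensFactor q z = (sieveDensity (sievePrimes q z))⁻¹ := by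
  unfold mertensFactor sieveDensity sievePrimes
  rw [Finset.prod_inv_distrib]

lemma sievePrimes_prime {q : ℕ} {z : ℝ} : ∀ p ∈ sievePrimes q z, p.Prime := fun _ hp =>
  (Finset.mem_filter.1 hp).2.1

/-- Trivial bound, from the telescoping product `∏_{2 ≤ k ≤ n} (1 - 1/k) = 1/n`. -/
lemma one_le_density_mul (q : ℕ) {z : ℝ} (hz : 1 ≤ z) :
    1 ≤ sieveDensity (sievePrimes q z) * z := by
  have key : ∀ n : ℕ, 1 ≤ sieveDensity ((Finset.range (n + 2)).filter
      (fun p : ℕ => p.Prime ∧ ¬ p ∣ q)) * (n + 1) := by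
    intro n
    induction n with
    | zero =>
      rw [Finset.filter_false_of_mem]
      · simp [sieveDensity]
      · rintro p hp ⟨h, _⟩
        have := h.two_le
        have := Finset.mem_range.1 hp
        omega
    | succ n ih =>
      rw [show n + 1 + 2 = (n + 2) + 1 by ring, Finset.range_add_one, Finset.filter_insert]
      have h0 := sieveDensity_nonneg ((Finset.range (n + 2)).filter
        (fun p : ℕ => p.Prime ∧ ¬ p ∣ q))
      have hn : (0 : ℝ) < n + 2 := by positivity
      split_ifs with h
      · unfold sieveDensity at *
        rw [Finset.prod_insert (by simp)]
        refine ih.trans (le_of_eq ?_)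
        push_cast
        field_simp
        ring
      · push_cast
        nlinarith
  unfold sievePrimes
  rcases Nat.lt_or_ge ⌈z⌉₊ 2 with h | h
  · rw [Finset.filter_false_of_mem]
    · simpa [sieveDensity] using hz
    · rintro p hp ⟨h', _⟩
      have := h'.two_le
      have := Finset.mem_range.1 hp
      omega
  · obtain ⟨n, hn⟩ := Nat.exists_eq_add_of_le' h
    rw [hn]
    refine (key n).trans (mul_le_mul_of_nonneg_left ?_ (sieveDensity_nonneg _))
    have := Nat.ceil_lt_add_one (zero_le_one.trans hz)
    rw [hn] at this
    push_cast at this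
    linarith

lemma one_le_density_primeFactors (q : ℕ) :
    1 ≤ sieveDensity q.primeFactors * 2 ^ q.primeFactors.card := by
  unfold sieveDensity
  rw [← Finset.prod_const, ← Finset.prod_mul_distrib]
  have h := Finset.prod_le_prod (s := q.primeFactors) (f := fun _ => (1 : ℝ))
    (g := fun p : ℕ => (1 - 1 / (p : ℝ)) * 2) (fun _ _ => zero_le_one) ?_
  · simpa using h
  · intro p hp
    have h2 : (2 : ℝ) ≤ p := by exact_mod_cast (Nat.prime_of_mem_primeFactors hp).two_le
    have h3 : 1 / (p : ℝ) ≤ 1 / 2 := one_div_le_one_div_of_le (by norm_num) h2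
    linarith

/-- `4^ω(q) ≪ q^(1/8)`: only boundedly many primes have `p^(1/8) < 4`. -/
lemma exists_four_pow_omega_le : ∃ C : ℝ, 0 < C ∧ ∀ q : ℕ, q ≠ 0 →
    (4 : ℝ) ^ q.primeFactors.card ≤ C * (q : ℝ) ^ (1 / 8 : ℝ) := by
  obtain ⟨B, hB⟩ : ∃ B : ℕ, ∀ p : ℕ, B ≤ p → (4 : ℝ) ≤ (p : ℝ) ^ (1 / 8 : ℝ) := by
    have h := ((tendsto_rpow_atTop (show (0 : ℝ) < 1 / 8 by norm_num)).comp
      tendsto_natCast_atTop_atTop).eventually_ge_atTop (4 : ℝ)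
    exact Filter.eventually_atTop.1 h
  refine ⟨4 ^ B, by positivity, fun q hq => ?_⟩
  rw [← Finset.card_filter_add_card_filter_not (fun p => p < B), pow_add]
  refine mul_le_mul ?_ ?_ (by positivity) (by positivity)
  · refine pow_le_pow_right₀ (by norm_num) ?_
    calc _ ≤ (Finset.range B).card := Finset.card_le_card fun p hp =>
          Finset.mem_range.2 (Finset.mem_filter.1 hp).2
      _ = B := Finset.card_range B
  · set S := q.primeFactors.filter (fun p => ¬ p < B)
    calc (4 : ℝ) ^ S.card = ∏ _p ∈ S, (4 : ℝ) := by rw [Finset.prod_const]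
      _ ≤ ∏ p ∈ S, (p : ℝ) ^ (1 / 8 : ℝ) :=
          Finset.prod_le_prod (fun _ _ => by norm_num) fun p hp =>
            hB p (not_lt.1 (Finset.mem_filter.1 hp).2)
      _ = (((∏ p ∈ S, p : ℕ)) : ℝ) ^ (1 / 8 : ℝ) := by
          rw [Real.finsetProd_rpow _ _ (fun _ _ => Nat.cast_nonneg _)]
          push_cast; rfl
      _ ≤ (q : ℝ) ^ (1 / 8 : ℝ) := by
          refine Real.rpow_le_rpow (Nat.cast_nonneg _) ?_ (by norm_num)
          have h1 : ∏ p ∈ S, p ∣ q :=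
            (Finset.prod_dvd_prod_of_subset _ _ _ (Finset.filter_subset _ _)).trans
              (Nat.prod_primeFactors_dvd q)
          exact_mod_cast Nat.le_of_dvd (Nat.pos_of_ne_zero hq) h1

lemma IqE_eq (q : ℕ) : IqE q = (Finset.Ioc ⌊(q : ℝ) ^ ((1 : ℝ) / 2) / Real.exp 1⌋₊
    ⌊(q : ℝ) ^ ((1 : ℝ) / 2)⌋₊).filter (fun n => Nat.Coprime n q) := by
  ext n
  simp only [IqE, Finset.mem_filter, Finset.mem_range, Finset.mem_Ioc]
  rw [Nat.floor_lt (by positivity), Nat.lt_succ_iff]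
  tauto

lemma gcd_primorialLT_eq_one {n : ℕ} {z : ℝ} (h : ∀ p : ℕ, p.Prime → p < ⌈z⌉₊ → ¬ p ∣ n) :
    Nat.gcd n (primorialLT z) = 1 := by
  refine Nat.Coprime.prod_right fun p hp => ?_
  obtain ⟨h1, h2⟩ := Finset.mem_filter.1 hp
  exact ((Nat.Prime.coprime_iff_not_dvd h2).2 (h p h2 (Finset.mem_range.1 h1))).symm

/-- The elements of `[I]_q` free of prime factors `< z`. -/
def sifted (q : ℕ) (z : ℝ) : Finset ℕ := (IqE q).filter fun n => Nat.gcd n (primorialLT z) = 1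

lemma card_IqE {q : ℕ} (hq : q ≠ 0) :
    |((IqE q).card : ℝ) - ((q : ℝ) ^ ((1 : ℝ) / 2) - (q : ℝ) ^ ((1 : ℝ) / 2) / Real.exp 1) *
      sieveDensity q.primeFactors| ≤ 2 ^ q.primeFactors.card := by
  have hR : (0 : ℝ) ≤ (q : ℝ) ^ ((1 : ℝ) / 2) := by positivity
  have h := (divSum_coprime q).sum_Ioc (a := (q : ℝ) ^ ((1 : ℝ) / 2) / Real.exp 1)
    (b := (q : ℝ) ^ ((1 : ℝ) / 2)) (by positivity)
    (div_le_self hR (Real.one_le_exp zero_le_one))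
  simp only [sieveInd_primeFactors hq] at h
  rw [Finset.sum_boole, ← IqE_eq] at h
  exact h

lemma le_card_sifted {q : ℕ} (hq : q ≠ 0) {z : ℝ} (hz : 1 ≤ z) (m : ℕ) (δ : ℝ) (hδ : δ ≤ 1)
    (hm : Real.exp (Real.exp 48 * (1 / 4) ^ m) ≤ 1 + δ) :
    ((q : ℝ) ^ ((1 : ℝ) / 2) - (q : ℝ) ^ ((1 : ℝ) / 2) / Real.exp 1) *
      (sieveDensity q.primeFactors * (sieveDensity (sievePrimes q z) * (1 - δ))) -
      2 ^ q.primeFactors.card * z ^ (4 * m + 6) ≤ ((sifted q z).card : ℝ) := by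
  have hR : (0 : ℝ) ≤ (q : ℝ) ^ ((1 : ℝ) / 2) := by positivity
  have hRe := div_le_self hR (Real.one_le_exp zero_le_one)
  obtain ⟨L, l, hL, hLn, hl⟩ := sieve_minorant q hz m δ hδ hm
  have hprod := (divSum_coprime q).mul hL (by
    rw [Set.disjoint_left]
    exact fun p h h' => h' h)
  have h := (abs_le.1 (hprod.sum_Ioc (a := (q : ℝ) ^ ((1 : ℝ) / 2) / Real.exp 1)
    (b := (q : ℝ) ^ ((1 : ℝ) / 2)) (by positivity) hRe)).1
  have h2 : ∑ n ∈ Finset.Ioc ⌊(q : ℝ) ^ ((1 : ℝ) / 2) / Real.exp 1⌋₊ ⌊(q : ℝ) ^ ((1 : ℝ) / 2)⌋₊,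
      sieveInd q.primeFactors n * L n ≤ ((sifted q z).card : ℝ) := by
    have h3 : ((sifted q z).card : ℝ) =
        ∑ n ∈ Finset.Ioc ⌊(q : ℝ) ^ ((1 : ℝ) / 2) / Real.exp 1⌋₊ ⌊(q : ℝ) ^ ((1 : ℝ) / 2)⌋₊,
          if Nat.Coprime n q ∧ Nat.gcd n (primorialLT z) = 1 then (1 : ℝ) else 0 := by
      rw [Finset.sum_boole, sifted, IqE_eq, Finset.filter_filter]
    rw [h3]
    refine Finset.sum_le_sum fun n _ => ?_
    refine (mul_le_mul_of_nonneg_left (hLn n) (sieveInd_nonneg _ n)).trans ?_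
    rw [sieveInd_primeFactors hq]
    by_cases hc : Nat.Coprime n q
    · rw [if_pos hc, one_mul]
      by_cases hg : ∃ p ∈ sievePrimes q z, p ∣ n
      · obtain ⟨p, hp, hpn⟩ := hg
        rw [sieveInd_eq_zero hp hpn]
        split_ifs <;> norm_num
      · rw [if_pos]
        · exact sieveInd_le_one _ _
        · refine ⟨hc, gcd_primorialLT_eq_one fun p hp hpz hpn => hg ⟨p, ?_, hpn⟩⟩
          refine Finset.mem_filter.2 ⟨Finset.mem_range.2 hpz, hp, fun hpq => ?_⟩
          exact hp.one_lt.ne' (Nat.eq_one_of_dvd_coprimes hc hpn hpq)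
    · rw [if_neg hc, zero_mul]
      split_ifs <;> norm_num
  have h4 : ((q : ℝ) ^ ((1 : ℝ) / 2) - (q : ℝ) ^ ((1 : ℝ) / 2) / Real.exp 1) *
      (sieveDensity q.primeFactors * (sieveDensity (sievePrimes q z) * (1 - δ))) ≤
      ((q : ℝ) ^ ((1 : ℝ) / 2) - (q : ℝ) ^ ((1 : ℝ) / 2) / Real.exp 1) *
      (sieveDensity q.primeFactors * l) :=
    mul_le_mul_of_nonneg_left (mul_le_mul_of_nonneg_left hl (sieveDensity_nonneg _))
      (sub_nonneg.2 hRe)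
  linarith

/-- Choice of the truncation parameter `m ≈ 1 / (32 √ε)`. -/
lemma exists_param : ∃ ε₀ : ℝ, 0 < ε₀ ∧ ∀ ε : ℝ, 0 < ε → ε < ε₀ →
    ∃ m : ℕ, √ε * (4 * m + 7) ≤ 1 / 4 ∧ Real.exp (Real.exp 48 * (1 / 4) ^ m) ≤ 1 + ε / 8 := by
  have hlim : Filter.Tendsto (fun m : ℕ => Real.exp 48 * 65536 * ((m : ℝ) ^ 2 * (1 / 4) ^ m))
      Filter.atTop (nhds 0) := by
    have := (tendsto_pow_const_mul_const_pow_of_abs_lt_one 2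
      (show |(1 / 4 : ℝ)| < 1 by rw [abs_of_pos] <;> norm_num)).const_mul (Real.exp 48 * 65536)
    simpa using this
  obtain ⟨m₀, hm₀⟩ := Filter.eventually_atTop.1 (hlim.eventually (gt_mem_nhds zero_lt_one))
  have hD : (0 : ℝ) < 32 * (m₀ + 2) := by positivity
  refine ⟨min (1 / 4096) ((1 / (32 * (m₀ + 2))) ^ 2), by positivity, fun ε hε hε₀ => ?_⟩
  have hs : 0 < √ε := Real.sqrt_pos.2 hε
  have hsq : √ε ^ 2 = ε := Real.sq_sqrt hε.le
  have h1 : √ε < 1 / 64 := by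
    rw [Real.sqrt_lt' (by norm_num)]
    exact (hε₀.trans_le (min_le_left _ _)).trans_le (by norm_num)
  have h2 : √ε < 1 / (32 * (m₀ + 2)) := by
    rw [Real.sqrt_lt' (by positivity)]
    exact hε₀.trans_le (min_le_right _ _)
  have h3 : (m₀ : ℝ) + 2 ≤ 1 / (32 * √ε) := by
    rw [lt_div_iff₀ hD] at h2
    rw [le_div_iff₀ (by positivity)]
    linarith
  set m := ⌊1 / (32 * √ε)⌋₊ with hm
  have h4 : (m : ℝ) ≤ 1 / (32 * √ε) := Nat.floor_le (by positivity)
  have h5 : 1 / (32 * √ε) < m + 1 := Nat.lt_floor_add_one _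
  have h6 : m₀ + 1 ≤ m := Nat.le_floor (by push_cast; linarith)
  refine ⟨m, ?_, ?_⟩
  · rw [le_div_iff₀ (by positivity)] at h4
    linarith
  · have h7 := hm₀ m (by omega)
    have h8 : (1 : ℝ) ≤ m := by exact_mod_cast (by omega : 1 ≤ m)
    rw [div_lt_iff₀ (by positivity)] at h5
    -- `1 < 32 √ε (m + 1) ≤ 64 √ε m`
    have h9 : 1 < 64 * √ε * m := by nlinarith
    have h10 : 1 < 4096 * ε * m ^ 2 := by
      rw [← hsq]
      nlinarith
    have h11 : (0 : ℝ) < (1 / 4) ^ m := by positivity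
    have h12 : Real.exp 48 * (1 / 4) ^ m ≤ ε / 16 := by
      have h13 : 0 < Real.exp 48 * (1 / 4) ^ m := by positivity
      have h14 := mul_lt_mul_of_pos_left h10 h13
      have h15 : Real.exp 48 * 65536 * ((m : ℝ) ^ 2 * (1 / 4) ^ m) * ε < 1 * ε :=
        mul_lt_mul_of_pos_right h7 hε
      nlinarith
    have hε1 : ε < 1 := (hε₀.trans_le (min_le_left _ _)).trans (by norm_num)
    have h16 := Real.abs_exp_sub_one_le (x := Real.exp 48 * (1 / 4) ^ m)
      (by rw [abs_of_pos (by positivity)]; linarith)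
    rw [abs_of_pos (show 0 < Real.exp 48 * (1 / 4) ^ m by positivity)] at h16
    have := le_abs_self (Real.exp (Real.exp 48 * (1 / 4) ^ m) - 1)
    linarith

/-- The sieve input: `𝔼 (f⁺ + f⁻) ≥ 1 - ε / 4` over `[I]_q`. -/
lemma sieve_lower : ∃ ε₀ : ℝ, 0 < ε₀ ∧ ∀ ε : ℝ, 0 < ε → ε < ε₀ → ∃ q₀ : ℕ, ∀ q : ℕ, q₀ ≤ q →
    0 < (IqE q).card ∧ (1 - ε / 4) * ((IqE q).card : ℝ) ≤
      mertensFactor q ((q : ℝ) ^ √ε) * ((sifted q ((q : ℝ) ^ √ε)).card : ℝ) := by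
  obtain ⟨ε₀, hε₀, hpar⟩ := exists_param
  obtain ⟨C, hC, hω⟩ := exists_four_pow_omega_le
  refine ⟨min ε₀ 1, by positivity, fun ε hε hε' => ?_⟩
  obtain ⟨m, hm1, hm2⟩ := hpar ε hε (hε'.trans_le (min_le_left _ _))
  have hε1 : ε < 1 := hε'.trans_le (min_le_right _ _)
  have hlarge := ((tendsto_rpow_atTop (show (0 : ℝ) < 1 / 8 by norm_num)).comp
      tendsto_natCast_atTop_atTop).eventually_ge_atTop (32 * C / ε)
  obtain ⟨q₁, hq₁⟩ := Filter.eventually_atTop.1 hlarge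
  refine ⟨q₁ + 1, fun q hq => ?_⟩
  have hq0 : q ≠ 0 := by omega
  have hq1 : (1 : ℝ) ≤ q := by exact_mod_cast (by omega : 1 ≤ q)
  have hqpos : (0 : ℝ) < q := by linarith
  have hbig : 32 * C / ε ≤ (q : ℝ) ^ (1 / 8 : ℝ) := hq₁ q (by omega)
  set z := (q : ℝ) ^ √ε with hz
  have hz1 : 1 ≤ z := Real.one_le_rpow hq1 (Real.sqrt_nonneg _)
  have hzpow : z ^ (4 * m + 7) ≤ (q : ℝ) ^ (1 / 4 : ℝ) := by
    rw [hz, ← Real.rpow_natCast, ← Real.rpow_mul hqpos.le]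
    refine Real.rpow_le_rpow_of_exponent_le hq1 ?_
    push_cast
    linarith
  have hz1' : 1 ≤ z ^ (4 * m + 7) := one_le_pow₀ hz1
  set R := (q : ℝ) ^ ((1 : ℝ) / 2) with hR
  have hR0 : 0 < R := by positivity
  set w : ℝ := 2 ^ q.primeFactors.card with hw
  have hw1 : 1 ≤ w := one_le_pow₀ (by norm_num)
  have hw2 : w ^ 2 ≤ C * (q : ℝ) ^ (1 / 8 : ℝ) := by
    refine le_trans (le_of_eq ?_) (hω q hq0)
    rw [hw, ← pow_mul, mul_comm, pow_mul]; norm_num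
  set v := sieveDensity q.primeFactors with hv
  set V := sieveDensity (sievePrimes q z) with hV
  have hvw : 1 ≤ v * w := one_le_density_primeFactors q
  have hV0 : 0 < V := density_pos _ sievePrimes_prime
  have hVz : 1 ≤ V * z := one_le_density_mul q hz1
  have hX : R / 2 ≤ R - R / Real.exp 1 := by
    have h2 : (2 : ℝ) ≤ Real.exp 1 := by linarith [Real.add_one_le_exp (1 : ℝ)]
    have := div_le_div_of_nonneg_left hR0.le (by norm_num) h2
    linarith
  set X := R - R / Real.exp 1 with hXdef
  -- `R = q^(1/8) · q^(1/8) · q^(1/4)` beats `w² z^(4m+7) ≤ C q^(1/8) q^(1/4)`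
  have hRbig : 32 * (w ^ 2 * z ^ (4 * m + 7)) ≤ ε * R := by
    have e1 : R = (q : ℝ) ^ (1 / 8 : ℝ) * ((q : ℝ) ^ (1 / 8 : ℝ) * (q : ℝ) ^ (1 / 4 : ℝ)) := by
      rw [hR, ← Real.rpow_add hqpos, ← Real.rpow_add hqpos]; norm_num
    have e2 : w ^ 2 * z ^ (4 * m + 7) ≤ C * (q : ℝ) ^ (1 / 8 : ℝ) * (q : ℝ) ^ (1 / 4 : ℝ) :=
      mul_le_mul hw2 hzpow (by positivity) (by positivity)
    rw [div_le_iff₀ hε] at hbig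
    have e3 := mul_le_mul_of_nonneg_right hbig
      (show 0 ≤ (q : ℝ) ^ (1 / 8 : ℝ) * (q : ℝ) ^ (1 / 4 : ℝ) by positivity)
    rw [e1]
    nlinarith
  have hXv : 16 * (w * z ^ (4 * m + 7)) ≤ ε * (X * v) := by
    have hv0 : 0 < v := density_pos _ fun p hp => Nat.prime_of_mem_primeFactors hp
    have e1 : 32 * (w * z ^ (4 * m + 7)) * w ≤ (ε * R * v) * w := by
      have : ε * R * 1 ≤ ε * R * (v * w) := mul_le_mul_of_nonneg_left hvw (by positivity)
      nlinarith
    have e2 := le_of_mul_le_mul_right e1 (by linarith)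
    have e3 : ε * v * (R / 2) ≤ ε * v * X := mul_le_mul_of_nonneg_left hX (by positivity)
    nlinarith
  have hN := abs_le.1 (card_IqE hq0)
  have hS := le_card_sifted hq0 hz1 m (ε / 8) (by linarith) hm2
  rw [← hR, ← hXdef, ← hv, ← hw] at hN hS
  rw [← hV] at hS
  have hwz : w ≤ w * z ^ (4 * m + 7) := le_mul_of_one_le_right (by linarith) hz1'
  constructor
  · have : ε * (X * v) ≤ X * v ∨ X * v < 0 := by
      rcases lt_or_ge (X * v) 0 with h | h
      · exact Or.inr h
      · exact Or.inl (mul_le_of_le_one_left h hε1.le)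
    have hpos : (0 : ℝ) < (IqE q).card := by
      rcases this with h | h
      · linarith [hN.1]
      · nlinarith
    exact_mod_cast hpos
  · rw [mertensFactor_eq, ← hV]
    have h1 : V⁻¹ ≤ z := by
      rw [inv_le_iff_one_le_mul₀ hV0, mul_comm]; exact hVz
    have h2 := mul_le_mul_of_nonneg_left hS (inv_pos.2 hV0).le
    have h3 : V⁻¹ * (X * (v * (V * (1 - ε / 8))) - w * z ^ (4 * m + 6)) =
        X * v * (1 - ε / 8) - V⁻¹ * (w * z ^ (4 * m + 6)) := by
      field_simp
    have h4 : V⁻¹ * (w * z ^ (4 * m + 6)) ≤ w * z ^ (4 * m + 7) := by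
      have := mul_le_mul_of_nonneg_right h1 (show 0 ≤ w * z ^ (4 * m + 6) by positivity)
      calc _ ≤ _ := this
        _ = _ := by ring
    rw [h3] at h2
    refine le_trans ?_ h2
    have h5 : (1 - ε / 4) * ((IqE q).card : ℝ) ≤ (1 - ε / 4) * (X * v + w) :=
      mul_le_mul_of_nonneg_left (by linarith [hN.2]) (by linarith)
    have h6 : 0 ≤ ε * w := by positivity
    linarith

/-! ### Level sets -/

lemma mertensFactor_nonneg (q : ℕ) (z : ℝ) : 0 ≤ mertensFactor q z := by
  rw [mertensFactor_eq]
  exact inv_nonneg.2 (sieveDensity_nonneg _)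

lemma fE_nonneg (q : ℕ) (ε : ℝ) (h : ℕ → ℝ) (Δ : ℝ) (n : ℕ) : 0 ≤ fE q ε h Δ n := by
  unfold fE
  refine mul_nonneg (mertensFactor_nonneg _ _) ?_
  split_ifs <;> norm_num

lemma sum_fE_mul (q : ℕ) (ε : ℝ) (h : ℕ → ℝ) (Δ : ℝ) (B : Set ((ZMod q)ˣ)) :
    ∑ n ∈ IqE q, fE q ε h Δ n * (if memUnit q B n then 1 else 0) =
      mertensFactor q ((q : ℝ) ^ √ε) * (((IqE q).filter fun n : ℕ =>
        Nat.gcd n (primorialLT ((q : ℝ) ^ √ε)) = 1 ∧ 0 < Δ * h n ∧ memUnit q B n).card : ℝ) := by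
  rw [← Finset.sum_boole, Finset.mul_sum]
  refine Finset.sum_congr rfl fun n hn => ?_
  unfold fE
  by_cases h1 : 0 < Δ * h n <;> by_cases h2 : Nat.gcd n (primorialLT ((q : ℝ) ^ √ε)) = 1 <;>
    by_cases h3 : memUnit q B n <;> simp [h1, h2, h3, hn]

lemma sum_fE_add (q : ℕ) (ε : ℝ) (h : ℕ → ℝ) (hne : ∀ n, h n ≠ 0) :
    ∑ n ∈ IqE q, fE q ε h 1 n + ∑ n ∈ IqE q, fE q ε h (-1) n =
      mertensFactor q ((q : ℝ) ^ √ε) * ((sifted q ((q : ℝ) ^ √ε)).card : ℝ) := by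
  rw [sifted, ← Finset.sum_boole, Finset.mul_sum, ← Finset.sum_add_distrib]
  refine Finset.sum_congr rfl fun n hn => ?_
  unfold fE
  by_cases h2 : Nat.gcd n (primorialLT ((q : ℝ) ^ √ε)) = 1
  · rcases lt_or_gt_of_ne (hne n) with h1 | h1
    · simp [h1, h1.not_gt, h2, hn]
    · simp [h1, h1.not_gt, h2, hn]
  · simp [h2]

/-- Split the sum of `g` over `p` according to whether `ε² ≤ g`. -/
lemma sum_le_level {α : Type*} [Fintype α] {ε : ℝ} (g : α → ℝ)
    (hg : ∀ a, 0 ≤ g a ∧ g a ≤ 1 + ε ^ 2) (p : α → Prop) :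
    ∑ a, g a * (if p a then 1 else 0) ≤
      (1 + ε ^ 2) * ((Finset.univ.filter fun a => ε ^ 2 ≤ g a ∧ p a).card : ℝ) +
        ε ^ 2 * (Fintype.card α : ℝ) := by
  have h1 : ε ^ 2 * (Fintype.card α : ℝ) = ∑ _a : α, ε ^ 2 := by
    rw [Finset.sum_const, Finset.card_univ, nsmul_eq_mul, mul_comm]
  rw [h1, ← Finset.sum_boole, Finset.mul_sum, ← Finset.sum_add_distrib]
  refine Finset.sum_le_sum fun a _ => ?_
  have h2 := hg a
  have h3 := sq_nonneg ε
  by_cases hp : p a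
  · by_cases hl : ε ^ 2 ≤ g a
    · simp only [hp, hl, and_self, if_true]; linarith
    · simp only [hp, hl, false_and, if_true, if_false]; linarith
  · simp only [hp, and_false, if_false]; linarith

lemma level_arith {ε φ N M S SB G A : ℝ} (hε : 0 < ε) (hε4 : ε ≤ 1 / 4) (hφ : 0 < φ) (hN : 0 < N)
    (hSB : 0 ≤ SB) (hle : SB ≤ S) (hMS : (1 - ε / 4) * N ≤ M * S)
    (hG : M * SB / N - ε ^ 2 ≤ G / φ) (hA : G ≤ (1 + ε ^ 2) * A + ε ^ 2 * φ) :
    (SB / S - ε) * φ ≤ A := by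
  have hpos : 0 < M * S := lt_of_lt_of_le (by nlinarith) hMS
  have hS : 0 < S := by
    rcases (hSB.trans hle).eq_or_lt with h | h
    · rw [← h, mul_zero] at hpos; exact absurd hpos (lt_irrefl _)
    · exact h
  set r := SB / S with hr
  have hr0 : 0 ≤ r := div_nonneg hSB hS.le
  have hr1 : r ≤ 1 := (div_le_one hS).2 hle
  have h1 : r * (1 - ε / 4) ≤ M * SB / N := by
    rw [le_div_iff₀ hN]
    have h2 : M * SB = r * (M * S) := by rw [hr]; field_simp
    rw [h2, mul_assoc]
    exact mul_le_mul_of_nonneg_left hMS hr0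
  have h3 : r * (1 - ε / 4) - ε ^ 2 ≤ G / φ := by linarith
  rw [le_div_iff₀ hφ] at h3
  have h4 : (1 + ε ^ 2) * ((r - ε) * φ) ≤ (r * (1 - ε / 4) - 2 * ε ^ 2) * φ := by
    rw [← mul_assoc]
    refine mul_le_mul_of_nonneg_right ?_ hφ.le
    have h5 : r * (ε / 4 + ε ^ 2) ≤ 1 * (ε / 4 + ε ^ 2) :=
      mul_le_mul_of_nonneg_right hr1 (by positivity)
    have h6 : ε ^ 2 ≤ ε / 4 := by nlinarith
    have h7 : 0 < ε ^ 3 := by positivity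
    nlinarith
  refine le_of_mul_le_mul_left (h4.trans ?_) (show 0 < 1 + ε ^ 2 by positivity)
  linarith

/-- **Basic properties of the dense-model level sets `A^Δ` (Easy set-up).** -/
theorem dense_model_level_sets :
    ∃ ε₀ : ℝ, 0 < ε₀ ∧
      ∀ ε : ℝ, 0 < ε → ε < ε₀ →
        ∀ C₂ : ℝ, 1 ≤ C₂ →
          ∃ q₀ : ℕ,
            ∀ (q : ℕ) [NeZero q], q₀ ≤ q →
              ∀ h : ℕ → ℝ, IsMultFn h → (∀ n : ℕ, h n ≠ 0) →
                ∀ g : ℝ → ((ZMod q)ˣ → ℝ),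
                  (∀ Δ : ℝ, (Δ = 1 ∨ Δ = -1) →
                    -- (D1)
                    (∀ a : (ZMod q)ˣ, 0 ≤ g Δ a ∧ g Δ a ≤ 1 + ε ^ 2) ∧
                    -- (D4)
                    ((∑ a : (ZMod q)ˣ, g Δ a) / (Fintype.card ((ZMod q)ˣ) : ℝ) =
                      (∑ n ∈ IqE q, fE q ε h Δ n) / ((IqE q).card : ℝ)) ∧
                    -- (D5)
                    (∀ H : Subgroup ((ZMod q)ˣ), H.index = 2 →
                      ∀ b : (ZMod q)ˣ,
                        |(∑ n ∈ IqE q, fE q ε h Δ n *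
                            (if memUnit q {u : (ZMod q)ˣ | b⁻¹ * u ∈ H} n then 1 else 0)) /
                              ((IqE q).card : ℝ) -
                          (∑ a : (ZMod q)ˣ, g Δ a * (if b⁻¹ * a ∈ H then 1 else 0)) /
                            (Fintype.card ((ZMod q)ˣ) : ℝ)| ≤
                          C₂ * (Real.log q) ^ (-(1 : ℝ) / 4))) →
                  -- conclusion (i)
                  ((1 - ε) * (Nat.totient q : ℝ) ≤
                    ((Finset.univ.filter fun a : (ZMod q)ˣ => ε ^ 2 ≤ g 1 a).card : ℝ) +
                      ((Finset.univ.filter fun a : (ZMod q)ˣ => ε ^ 2 ≤ g (-1) a).card : ℝ)) ∧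
                  -- conclusion (ii)
                  (∀ Δ : ℝ, (Δ = 1 ∨ Δ = -1) →
                    ∀ H : Subgroup ((ZMod q)ˣ), H.index ≤ 2 →
                      ∀ b : (ZMod q)ˣ,
                        ((((IqE q).filter fun n : ℕ =>
                            Nat.gcd n (primorialLT ((q : ℝ) ^ Real.sqrt ε)) = 1 ∧
                              0 < Δ * h n ∧
                              memUnit q {u : (ZMod q)ˣ | b⁻¹ * u ∈ H} n).card : ℝ) /
                            (((IqE q).filter fun n : ℕ =>
                              Nat.gcd n (primorialLT ((q : ℝ) ^ Real.sqrt ε)) = 1).card : ℝ) -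
                            ε) * (Nat.totient q : ℝ) ≤
                          ((Finset.univ.filter fun a : (ZMod q)ˣ =>
                            ε ^ 2 ≤ g Δ a ∧ b⁻¹ * a ∈ H).card : ℝ)) := by
  obtain ⟨ε₁, hε₁, hsieve⟩ := sieve_lower
  refine ⟨min ε₁ (1 / 4), by positivity, fun ε hε hε' C₂ hC₂ => ?_⟩
  have hε4 : ε ≤ 1 / 4 := (hε'.trans_le (min_le_right _ _)).le
  obtain ⟨q₁, hq₁⟩ := hsieve ε hε (hε'.trans_le (min_le_left _ _))
  have hlim : Filter.Tendsto (fun q : ℕ => C₂ * (Real.log q) ^ (-(1 : ℝ) / 4))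
      Filter.atTop (nhds 0) := by
    have h := ((tendsto_rpow_neg_atTop (show (0 : ℝ) < 1 / 4 by norm_num)).comp
      (Real.tendsto_log_atTop.comp tendsto_natCast_atTop_atTop)).const_mul C₂
    simpa [neg_div] using h
  obtain ⟨q₂, hq₂⟩ := Filter.eventually_atTop.1
    (hlim.eventually (gt_mem_nhds (show 0 < ε ^ 2 by positivity)))
  refine ⟨max q₁ q₂, fun q _ hq h _ hne g hg => ?_⟩
  obtain ⟨hNcard, hMS⟩ := hq₁ q ((le_max_left _ _).trans hq)
  have hκ := (hq₂ q ((le_max_right _ _).trans hq)).le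
  have hN : (0 : ℝ) < (IqE q).card := by exact_mod_cast hNcard
  have hφ : (0 : ℝ) < Nat.totient q := by
    exact_mod_cast Nat.totient_pos.2 (Nat.pos_of_ne_zero (NeZero.ne q))
  have hcard : (Fintype.card ((ZMod q)ˣ) : ℝ) = Nat.totient q := by
    exact_mod_cast ZMod.card_units_eq_totient q
  rw [hcard] at hg
  constructor
  · obtain ⟨hD1, hD4, -⟩ := hg 1 (Or.inl rfl)
    obtain ⟨hD1', hD4', -⟩ := hg (-1) (Or.inr rfl)
    have h1 := sum_le_level (g 1) hD1 (fun _ => True)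
    have h2 := sum_le_level (g (-1)) hD1' (fun _ => True)
    simp only [if_true, mul_one, and_true, hcard] at h1 h2
    have h3 := sum_fE_add q ε h hne
    have h4 : (∑ a : (ZMod q)ˣ, g 1 a) + ∑ a : (ZMod q)ˣ, g (-1) a =
        (mertensFactor q ((q : ℝ) ^ √ε) * ((sifted q ((q : ℝ) ^ √ε)).card : ℝ)) /
          ((IqE q).card : ℝ) * Nat.totient q := by
      rw [div_eq_iff hφ.ne'] at hD4 hD4'
      rw [hD4, hD4', ← h3]
      ring
    have h5 : (1 - ε / 4) * Nat.totient q ≤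
        (mertensFactor q ((q : ℝ) ^ √ε) * ((sifted q ((q : ℝ) ^ √ε)).card : ℝ)) /
          ((IqE q).card : ℝ) * Nat.totient q :=
      mul_le_mul_of_nonneg_right ((le_div_iff₀ hN).2 hMS) hφ.le
    rw [← h4] at h5
    have h6 : (1 + ε ^ 2) * ((1 - ε) * (Nat.totient q : ℝ)) ≤
        (1 - ε / 4 - 2 * ε ^ 2) * Nat.totient q := by
      rw [← mul_assoc]
      exact mul_le_mul_of_nonneg_right (by nlinarith [mul_pos hε hε]) hφ.le
    refine le_of_mul_le_mul_left (h6.trans ?_) (show 0 < 1 + ε ^ 2 by positivity)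
    linarith
  · intro Δ hΔ H hH b
    obtain ⟨hD1, hD4, hD5⟩ := hg Δ hΔ
    have h1 := sum_le_level (g Δ) hD1 (fun a => b⁻¹ * a ∈ H)
    rw [hcard] at h1
    have h2 := sum_fE_mul q ε h Δ {u : (ZMod q)ˣ | b⁻¹ * u ∈ H}
    have h3 : (∑ n ∈ IqE q, fE q ε h Δ n *
        (if memUnit q {u : (ZMod q)ˣ | b⁻¹ * u ∈ H} n then 1 else 0)) / ((IqE q).card : ℝ) - ε ^ 2 ≤
        (∑ a : (ZMod q)ˣ, g Δ a * (if b⁻¹ * a ∈ H then 1 else 0)) / (Nat.totient q : ℝ) := by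
      by_cases hH2 : H.index = 2
      · have := (le_abs_self _).trans ((hD5 H hH2 b).trans hκ)
        linarith
      · have hH0 : H.index ≠ 0 := Subgroup.index_ne_zero_of_finite
        have hH1 : H = ⊤ := Subgroup.index_eq_one.1 (by omega)
        subst hH1
        simp only [Subgroup.mem_top, if_true, mul_one, Set.ofPred_true]
        rw [hD4]
        have : ∑ n ∈ IqE q, fE q ε h Δ n * (if memUnit q Set.univ n then (1 : ℝ) else 0) ≤
            ∑ n ∈ IqE q, fE q ε h Δ n := by
          refine Finset.sum_le_sum fun n _ => ?_
          refine mul_le_of_le_one_right (fE_nonneg q ε h Δ n) ?_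
          split_ifs <;> norm_num
        have := div_le_div_of_nonneg_right this hN.le
        nlinarith [sq_nonneg ε]
    rw [h2] at h3
    refine level_arith hε hε4 hφ hN (Nat.cast_nonneg _) ?_ hMS h3 h1
    exact_mod_cast Finset.card_le_card fun n hn => by
      obtain ⟨h4, h5, _⟩ := Finset.mem_filter.1 hn
      exact Finset.mem_filter.2 ⟨h4, h5⟩
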